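/- arXiv:1805.08574 — 4 statements merged into one kernel-verified Lean document; each statement's English description precedes it below -/
import Mathlib

section
/- Let W be an m×n real matrix, let x ∈ ℝⁿ, and suppose there exists an index k such that x_k ≠ 0 and W_{jk} ≠ 0 for every row index j. Then for every m×n real matrix G there exist a diagonal n×n matrix D¹ and a diagonal m×m matrix D² such that D² · W · D¹ · x = G · x (where · denotes matrix multiplication / matrix-vector application). -/
/-- Proposition 1 (existence form): if some coordinate `x k` is nonzero and the `k`-th
column of `W` is entrywise nonzero, then for any matrix `G` of the same shape as `W`
there exist diagonal matrices `D¹` (n×n) and `D²` (m×m) with `D² W D¹ x = G x`. -/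
theorem io_adaptation_expresses_any_matrix
    (m n : ℕ) (W : Matrix (Fin m) (Fin n) ℝ) (x : Fin n → ℝ) (k : Fin n)
    (hx : x k ≠ 0) (hW : ∀ j : Fin m, W j k ≠ 0)
    (G : Matrix (Fin m) (Fin n) ℝ) :
    ∃ (D1 : Matrix (Fin n) (Fin n) ℝ) (D2 : Matrix (Fin m) (Fin m) ℝ),
      D1.IsDiag ∧ D2.IsDiag ∧ (D2 * W * D1).mulVec x = G.mulVec x := by
  -- `D1` sends `x` to the basis vector `e_k`, so `W * D1` sends `x` to the `k`-th column of `W`;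
  -- `D2` then rescales each entry of that column to the corresponding entry of `G x`.
  refine ⟨Matrix.diagonal (Pi.single k (x k)⁻¹),
    Matrix.diagonal (fun j => G.mulVec x j / W j k),
    Matrix.isDiag_diagonal _, Matrix.isDiag_diagonal _, ?_⟩
  have h1 : (Matrix.diagonal (Pi.single k (x k)⁻¹)).mulVec x = Pi.single k 1 := by
    ext i
    rw [Matrix.mulVec_diagonal]
    by_cases h : i = k
    · subst h
      simp [hx]
    · simp [h]
  rw [← Matrix.mulVec_mulVec, h1, ← Matrix.mulVec_mulVec, Matrix.mulVec_single_one]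
  ext j
  rw [Matrix.mulVec_diagonal]
  exact div_mul_cancel₀ _ (hW j)
end

section
/- Let W be an m×n real matrix, x ∈ ℝⁿ, and k an index with x_k ≠ 0 and W_{jk} ≠ 0 for every row index j. Let G be any m×n real matrix and set yᴳ = G · x ∈ ℝᵐ. Define D¹ to be the n×n diagonal matrix whose (k,k) entry is 1/x_k and whose other diagonal entries are 0, and define D² to be the m×m diagonal matrix whose (j,j) entry is yᴳ_j / W_{jk}. Then D² · W · D¹ · x = yᴳ. -/
/-- The explicit construction in the proof of Proposition 1: with
`D¹ = diag(…, 1/x_k at position k, 0 elsewhere)` and `D² = diag(yᴳ_j / W_{jk})`,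
one gets `D² W D¹ x = yᴳ = G x`. -/
theorem io_adaptation_explicit_construction
    (m n : ℕ) (W : Matrix (Fin m) (Fin n) ℝ) (x : Fin n → ℝ) (k : Fin n)
    (hx : x k ≠ 0) (hW : ∀ j : Fin m, W j k ≠ 0)
    (G : Matrix (Fin m) (Fin n) ℝ) :
    let yG : Fin m → ℝ := G.mulVec x
    let D1 : Matrix (Fin n) (Fin n) ℝ :=
      Matrix.diagonal (fun i => if i = k then 1 / x k else 0)
    let D2 : Matrix (Fin m) (Fin m) ℝ :=
      Matrix.diagonal (fun j => yG j / W j k)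
    (D2 * W * D1).mulVec x = yG := by
  intro yG D1 D2
  -- `D1` sends `x` to the `k`-th standard basis vector, so `W` picks out its `k`-th column.
  have h1 : D1.mulVec x = Pi.single k 1 := by
    ext i
    by_cases h : i = k
    · subst h
      simp [D1, Matrix.mulVec_diagonal, hx]
    · simp [D1, Matrix.mulVec_diagonal, h]
  rw [← Matrix.mulVec_mulVec, h1, ← Matrix.mulVec_mulVec, Matrix.mulVec_single_one]
  ext j
  simp only [D2, Matrix.mulVec_diagonal, Matrix.col_apply]
  exact div_mul_cancel₀ _ (hW j)
end

section
/- Let W be an m×n real matrix and x ∈ ℝⁿ, and suppose there exists an index k such that x_k ≠ 0 and W_{jk} ≠ 0 for every row index j. Then for every target vector y ∈ ℝᵐ there exist a diagonal n×n matrix D¹ and a diagonal m×m matrix D² such that D² · W · D¹ · x = y. In other words, the map G ↦ D² W D¹ realizes every possible output vector at x, so IO-adaptation can express any mapping from the input x to the output space ℝᵐ. -/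
/-- Vector-target form of Proposition 1: under the same hypotheses on `x` and the
`k`-th column of `W`, every target vector `y ∈ ℝᵐ` is realized as `D² W D¹ x` for
some diagonal matrices `D¹`, `D²`. -/
theorem io_adaptation_realizes_any_vector
    (m n : ℕ) (W : Matrix (Fin m) (Fin n) ℝ) (x : Fin n → ℝ) (k : Fin n)
    (hx : x k ≠ 0) (hW : ∀ j : Fin m, W j k ≠ 0)
    (y : Fin m → ℝ) :
    ∃ (D1 : Matrix (Fin n) (Fin n) ℝ) (D2 : Matrix (Fin m) (Fin m) ℝ),
      D1.IsDiag ∧ D2.IsDiag ∧ (D2 * W * D1).mulVec x = y := by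
  -- `D1` keeps only the `k`-th coordinate of `x`, so `W D1 x` is `x k` times the `k`-th column
  -- of `W`; no entry of that vector vanishes, and `D2` rescales each one to the target.
  refine ⟨Matrix.diagonal (Pi.single k 1), Matrix.diagonal fun j => y j / (W j k * x k),
    Matrix.isDiag_diagonal _, Matrix.isDiag_diagonal _, ?_⟩
  ext j
  have hj := hW j
  simp only [Matrix.mulVec, dotProduct, Matrix.mul_diagonal, Matrix.diagonal_mul]
  rw [Finset.sum_eq_single k]
  · rw [Pi.single_eq_same]
    field_simp
  · intro i _ hi
    simp [Pi.single_eq_of_ne hi]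
  · simp
end

section
/- Let W be an m×n real matrix and x ∈ ℝⁿ with x ≠ 0, and suppose every column of W has all entries nonzero. Then for any two m×n real matrices G and G′ with G · x ≠ G′ · x, any diagonal pairs (D¹, D²) and (E¹, E²) realizing them (i.e., D² W D¹ x = G x and E² W E¹ x = G′ x) must be distinct as pairs; moreover both such pairs exist. Hence the assignment of adaptation parameters separates points of the image space: distinct target outputs G x ≠ G′ x are realized by necessarily distinct diagonal parameter pairs, and every target in ℝᵐ is realized. -/
/-! Separation holds because equal parameter pairs give equal outputs. For realizability
(`exists_diag_mulVec_eq`), pick `k` with `x k ≠ 0` and let the input matrix keep only that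
coordinate: then `W D¹ x` is `x k` times the `k`-th column of `W`, which is entrywise nonzero,
so a diagonal rescaling of the output reaches any target. -/

/-- Every target vector is realized at `x`, whether or not it is of the form `G x`. -/
lemma exists_diag_mulVec_eq {m n : ℕ} (W : Matrix (Fin m) (Fin n) ℝ) (x : Fin n → ℝ)
    (hx : x ≠ 0) (hW : ∀ (j : Fin m) (k : Fin n), W j k ≠ 0) (y : Fin m → ℝ) :
    ∃ (D1 : Matrix (Fin n) (Fin n) ℝ) (D2 : Matrix (Fin m) (Fin m) ℝ),
      D1.IsDiag ∧ D2.IsDiag ∧ (D2 * W * D1).mulVec x = y := by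
  obtain ⟨k, hk⟩ := Function.ne_iff.mp hx
  have hk : x k ≠ 0 := hk
  refine ⟨Matrix.diagonal (Pi.single k 1), Matrix.diagonal fun j => y j / (W j k * x k),
    Matrix.isDiag_diagonal _, Matrix.isDiag_diagonal _, ?_⟩
  ext j
  have hjk := hW j k
  simp only [Matrix.mulVec, dotProduct, Matrix.mul_diagonal, Matrix.diagonal_mul]
  rw [Finset.sum_eq_single k]
  · simp only [Pi.single_eq_same]
    field_simp
  · intro i _ hi
    simp [Pi.single_eq_of_ne hi]
  · simp

/-- Separation and realizability: if `x ≠ 0` and every entry of `W` is nonzero, then for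
any `G`, `G'` with `G x ≠ G' x`, any diagonal pairs realizing `G x` and `G' x`
respectively must be distinct as pairs, and both such pairs exist. -/
theorem io_adaptation_separates_and_realizes
    (m n : ℕ) (W : Matrix (Fin m) (Fin n) ℝ) (x : Fin n → ℝ)
    (hx : x ≠ 0) (hW : ∀ (j : Fin m) (k : Fin n), W j k ≠ 0)
    (G G' : Matrix (Fin m) (Fin n) ℝ) (hGG' : G.mulVec x ≠ G'.mulVec x) :
    (∀ (D1 E1 : Matrix (Fin n) (Fin n) ℝ) (D2 E2 : Matrix (Fin m) (Fin m) ℝ),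
      D1.IsDiag → D2.IsDiag → E1.IsDiag → E2.IsDiag →
      (D2 * W * D1).mulVec x = G.mulVec x →
      (E2 * W * E1).mulVec x = G'.mulVec x →
      (D1, D2) ≠ (E1, E2)) ∧
    (∃ (D1 : Matrix (Fin n) (Fin n) ℝ) (D2 : Matrix (Fin m) (Fin m) ℝ),
      D1.IsDiag ∧ D2.IsDiag ∧ (D2 * W * D1).mulVec x = G.mulVec x) ∧
    (∃ (E1 : Matrix (Fin n) (Fin n) ℝ) (E2 : Matrix (Fin m) (Fin m) ℝ),
      E1.IsDiag ∧ E2.IsDiag ∧ (E2 * W * E1).mulVec x = G'.mulVec x) := by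
  refine ⟨?_, exists_diag_mulVec_eq W x hx hW _, exists_diag_mulVec_eq W x hx hW _⟩
  rintro D1 E1 D2 E2 - - - - hD hE h
  obtain ⟨rfl, rfl⟩ := Prod.mk.inj h
  exact hGG' (hD.symm.trans hE)
end
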